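/- (Fundamental Theorem of Asset Pricing for utility-based NGD.) Let D ⊆ 𝒫 be convex and weakly compact, and let A ⊆ L^0 be a convex, D-consistent set of attainable P&Ls. Then the model satisfies the utility-based No Good Deals condition (there exists no X ∈ A with u(X) > 0) if and only if D ∩ ℛ(A) ≠ ∅. -/

import Mathlib

open MeasureTheory Filter Set
open scoped ENNReal

variable {Ω : Type*} [MeasurableSpace Ω]

/-- Densities of probability measures absolutely continuous w.r.t. `P`. -/
def Dens (P : Measure Ω) : Set (Ω → ℝ) :=
  {Z | Measurable Z ∧ (∀ ω, 0 ≤ Z ω) ∧ ∫⁻ ω, ENNReal.ofReal (Z ω) ∂P = 1}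

/-- `E_Q[X] = E_Q[X⁺] − E_Q[X⁻]` with the convention `∞ − ∞ = −∞`, where `dQ/dP = Z`. -/
noncomputable def eexp (P : Measure Ω) (Z X : Ω → ℝ) : EReal :=
  if (∫⁻ ω, ENNReal.ofReal (-(Z ω * X ω)) ∂P) = ⊤ then ⊥
  else ((∫⁻ ω, ENNReal.ofReal (Z ω * X ω) ∂P : ℝ≥0∞) : EReal)
    - ((∫⁻ ω, ENNReal.ofReal (-(Z ω * X ω)) ∂P : ℝ≥0∞) : EReal)

/-- Coherent utility function determined by a set of densities `D`. -/
noncomputable def cohU (P : Measure Ω) (D : Set (Ω → ℝ)) (X : Ω → ℝ) : EReal :=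
  ⨅ Z ∈ D, eexp P Z X

/-- The weak `L¹`-space associated with `D`. -/
def Lw (P : Measure Ω) (D : Set (Ω → ℝ)) : Set (Ω → ℝ) :=
  {X | Measurable X ∧ ⊥ < cohU P D X ∧ ⊥ < cohU P D (fun ω => -X ω)}

noncomputable def tailSup (P : Measure Ω) (D : Set (Ω → ℝ)) (X : Ω → ℝ) (n : ℕ) : ℝ≥0∞ :=
  ⨆ Z ∈ D, ∫⁻ ω in {ω | (n : ℝ) < |X ω|}, ENNReal.ofReal (Z ω * |X ω|) ∂P

/-- The strong `L¹`-space associated with `D`. -/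
def Ls (P : Measure Ω) (D : Set (Ω → ℝ)) : Set (Ω → ℝ) :=
  {X | Measurable X ∧ Tendsto (tailSup P D X) atTop (nhds 0)}

/-- Risk-neutral densities for the set `A` of attainable P&Ls. -/
def RiskNeutral (P : Measure Ω) (A : Set (Ω → ℝ)) : Set (Ω → ℝ) :=
  {Z | Z ∈ Dens P ∧ ∀ X ∈ A, eexp P Z X ≤ 0}

/-- `A` is `D`-consistent. -/
def DConsistent (P : Measure Ω) (D A : Set (Ω → ℝ)) : Prop :=
  ∃ A' ⊆ A ∩ Ls P D, D ∩ RiskNeutral P A = D ∩ RiskNeutral P A'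

/-- Sequential compactness of `D` in the weak topology `σ(L¹, L^∞)`. -/
def WSeqCompact (P : Measure Ω) (D : Set (Ω → ℝ)) : Prop :=
  ∀ Z : ℕ → Ω → ℝ, (∀ n, Z n ∈ D) → ∃ W ∈ D, ∃ φ : ℕ → ℕ, StrictMono φ ∧
    ∀ g : Ω → ℝ, Measurable g → (∃ C : ℝ, ∀ ω, |g ω| ≤ C) →
      Tendsto (fun k => ∫ ω, Z (φ k) ω * g ω ∂P) atTop (nhds (∫ ω, W ω * g ω ∂P))

/-- `D` is closed under `L¹`-convergence (within densities). -/
def L1Closed (P : Measure Ω) (D : Set (Ω → ℝ)) : Prop :=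
  ∀ Z : ℕ → Ω → ℝ, (∀ n, Z n ∈ D) → ∀ W ∈ Dens P,
    Tendsto (fun n => ∫ ω, |Z n ω - W ω| ∂P) atTop (nhds 0) → W ∈ D

/-!
For finitely many claims `X₁, …, Xₙ` in `L¹_s(D)`, the price vectors `(E_Q[Xᵢ])ᵢ`, `Q ∈ D`, form a
compact convex set. If it misses the negative orthant, the minimax theorem yields a convex
combination of the claims with uniformly positive price, i.e. a good deal. So finite subfamilies,
and by weak compactness countable ones, are priced by elements of `D`.

Sequential compactness alone does not give uncountable families. Instead, maximize the strictly
concave, weakly upper semicontinuous functional `Z ↦ ∫ Z / (1 + Z)` over the densities pricing a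
countable subfamily. A subfamily whose maximum value is as small as possible has an almost surely
unique maximizer, unchanged when one more claim is added, so it prices every claim.
-/

open ProbabilityTheory

section Maximizers

/-- Choose `s` so that the maximum of `J` on `C s` is least among countable sets: monotonicity along
a minimizing sequence makes the union of the sequence such a set. -/
lemma exists_countable_forall_isMaxOn_insert {ι α : Type*} {B : Set ι} {C : Set ι → Set α}
    {J : α → ℝ} (hC : Antitone C) (hJ : BddBelow (J '' C ∅))
    (hmax : ∀ s ⊆ B, s.Countable → ∃ z ∈ C s, IsMaxOn J (C s) z) :
    ∃ s ⊆ B, s.Countable ∧ ∀ i ∈ B, ∃ w ∈ C (insert i s), IsMaxOn J (C s) w := by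
  let T : Set (Set ι) := {s | s ⊆ B ∧ s.Countable}
  have : Nonempty α := (hmax ∅ (empty_subset B) countable_empty).nonempty
  choose! z hz hzmax using fun (s : Set ι) (hs : s ∈ T) => hmax s hs.1 hs.2
  have hbdd : BddBelow ((J ∘ z) '' T) := hJ.mono <| by
    rintro _ ⟨s, hs, rfl⟩
    exact ⟨z s, hC (empty_subset s) (hz s hs), rfl⟩
  have hanti : ∀ s ∈ T, ∀ t ∈ T, s ⊆ t → J (z t) ≤ J (z s) := fun s hs t ht hst =>
    hzmax s hs (hC hst (hz t ht))
  obtain ⟨v, -, hv, hvT⟩ := exists_seq_tendsto_sInf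
    (Set.Nonempty.image (J ∘ z) (s := T) ⟨∅, empty_subset B, countable_empty⟩) hbdd
  choose s hs hsv using hvT
  have hU : (⋃ n, s n) ∈ T :=
    ⟨iUnion_subset fun n => (hs n).1, countable_iUnion fun n => (hs n).2⟩
  have hle : J (z (⋃ n, s n)) ≤ sInf ((J ∘ z) '' T) := ge_of_tendsto' hv fun n =>
    hsv n ▸ hanti _ (hs n) _ hU (subset_iUnion s n)
  refine ⟨_, hU.1, hU.2, fun i hi => ?_⟩
  have hins : insert i (⋃ n, s n) ∈ T := ⟨insert_subset hi hU.1, hU.2.insert i⟩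
  refine ⟨_, hz _ hins, fun y hy => ?_⟩
  exact (hzmax _ hU hy).trans (hle.trans (csInf_le hbdd ⟨_, hins, rfl⟩))

lemma ae_eq_of_isMaxOn_integral_comp {μ : Measure Ω} {s : Set ℝ} {φ : ℝ → ℝ}
    (hφ : StrictConcaveOn ℝ s φ) {C : Set (Ω → ℝ)} (hC : Convex ℝ C)
    (hCs : ∀ Z ∈ C, ∀ ω, Z ω ∈ s) (hint : ∀ Z ∈ C, Integrable (fun ω => φ (Z ω)) μ)
    {Z W : Ω → ℝ} (hZ : Z ∈ C) (hW : W ∈ C)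
    (hZmax : IsMaxOn (fun V : Ω → ℝ => ∫ ω, φ (V ω) ∂μ) C Z)
    (hWmax : IsMaxOn (fun V : Ω → ℝ => ∫ ω, φ (V ω) ∂μ) C W) : Z =ᵐ[μ] W := by
  let M : Ω → ℝ := (1 / 2 : ℝ) • Z + (1 / 2 : ℝ) • W
  have hM : M ∈ C := hC hZ hW (by norm_num) (by norm_num) (by norm_num)
  have hmean_int : Integrable (fun ω => 1 / 2 * φ (Z ω) + 1 / 2 * φ (W ω)) μ :=
    ((hint Z hZ).const_mul _).add ((hint W hW).const_mul _)
  have hmean_le : ∀ ω, 1 / 2 * φ (Z ω) + 1 / 2 * φ (W ω) ≤ φ (M ω) := fun ω =>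
    hφ.concaveOn.2 (hCs Z hZ ω) (hCs W hW ω) (by norm_num) (by norm_num) (by norm_num)
  have hint_eq : ∫ ω, 1 / 2 * φ (Z ω) + 1 / 2 * φ (W ω) ∂μ = ∫ ω, φ (M ω) ∂μ := by
    refine le_antisymm (integral_mono hmean_int (hint M hM) hmean_le) ?_
    rw [integral_add ((hint Z hZ).const_mul _) ((hint W hW).const_mul _), integral_const_mul,
      integral_const_mul]
    linarith [isMaxOn_iff.1 hZmax M hM, isMaxOn_iff.1 hWmax M hM]
  filter_upwards [(integral_eq_iff_of_ae_le hmean_int (hint M hM)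
    (Eventually.of_forall hmean_le)).1 hint_eq] with ω hω
  by_contra hne
  exact (hφ.2 (hCs Z hZ ω) (hCs W hW ω) hne (by norm_num) (by norm_num) (by norm_num)).ne hω

end Maximizers

lemma exists_mem_stdSimplex_forall_le_dotProduct {ι : Type*} [Fintype ι] {K : Set (ι → ℝ)}
    (hKne : K.Nonempty) (hKconv : Convex ℝ K) (hKcomp : IsCompact K) (hK : Disjoint K (Iic 0)) :
    ∃ c ∈ stdSimplex ℝ ι, ∃ ε > 0, ∀ y ∈ K, ε ≤ y ⬝ᵥ c := by
  classical
  have hvertex : ∀ y ∈ K, ∃ c ∈ range fun i : ι => (Pi.single i 1 : ι → ℝ), 0 < y ⬝ᵥ c := by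
    intro y hy
    obtain ⟨i, hi⟩ : ∃ i, 0 < y i := by
      simpa [Pi.le_def] using disjoint_left.1 hK hy
    exact ⟨_, ⟨i, rfl⟩, by simpa using hi⟩
  obtain ⟨c, hc, hpos⟩ := Sion.exists_lt_iInf_of_lt_iInf_of_finite
    (X := K) (Y := stdSimplex ℝ ι) (f := fun y c => y ⬝ᵥ c) hKne hKcomp
    (fun c _ => (show ContinuousOn (fun y : ι → ℝ => y ⬝ᵥ c) K by fun_prop).lowerSemicontinuousOn)
    (fun c _ => ((dotProductBilin ℝ ℝ).flip c).convexOn hKconv |>.quasiconvexOn)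
    (convex_stdSimplex ℝ ι)
    (fun y _ => (show ContinuousOn (fun c : ι → ℝ => y ⬝ᵥ c) _ by fun_prop).upperSemicontinuousOn)
    (fun y _ => ((dotProductBilin ℝ ℝ) y).concaveOn (convex_stdSimplex ℝ ι) |>.quasiconcaveOn)
    hKconv (finite_range _) (range_subset_iff.2 (single_mem_stdSimplex ℝ)) hvertex
  obtain ⟨y₀, hy₀, hmin⟩ := hKcomp.exists_isMinOn hKne
    (show ContinuousOn (fun y => y ⬝ᵥ c) K by fun_prop)
  exact ⟨c, hc, y₀ ⬝ᵥ c, hpos y₀ hy₀, fun y hy => hmin hy⟩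

variable {P : Measure Ω} {D : Set (Ω → ℝ)}

section Densities

variable {Z : Ω → ℝ}

lemma Dens.integrable (hZ : Z ∈ Dens P) : Integrable Z P := by
  obtain ⟨hm, h0, h1⟩ := hZ
  refine ⟨hm.aestronglyMeasurable, ?_⟩
  rw [hasFiniteIntegral_iff_ofReal (Eventually.of_forall h0), h1]
  exact ENNReal.one_lt_top

lemma Dens.integral_eq_one (hZ : Z ∈ Dens P) : ∫ ω, Z ω ∂P = 1 := by
  rw [integral_eq_lintegral_of_nonneg_ae (Eventually.of_forall hZ.2.1) hZ.1.aestronglyMeasurable,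
    hZ.2.2, ENNReal.toReal_one]

lemma eexp_eq_integral {X : Ω → ℝ} (h : Integrable (fun ω => Z ω * X ω) P) :
    eexp P Z X = ((∫ ω, Z ω * X ω ∂P : ℝ) : EReal) := by
  have hpos : (∫⁻ ω, ENNReal.ofReal (Z ω * X ω) ∂P) ≠ ⊤ := h.lintegral_lt_top.ne
  have hneg : (∫⁻ ω, ENNReal.ofReal (-(Z ω * X ω)) ∂P) ≠ ⊤ := h.neg.lintegral_lt_top.ne
  rw [eexp, if_neg hneg, integral_eq_lintegral_pos_part_sub_lintegral_neg_part h,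
    EReal.coe_sub, EReal.coe_ennreal_toReal hpos, EReal.coe_ennreal_toReal hneg]

lemma le_cohU {X : Ω → ℝ} {c : ℝ} (hint : ∀ Z ∈ D, Integrable (fun ω => Z ω * X ω) P)
    (hc : ∀ Z ∈ D, c ≤ ∫ ω, Z ω * X ω ∂P) : (c : EReal) ≤ cohU P D X := by
  refine le_iInf₂ fun Z hZ => ?_
  rw [eexp_eq_integral (hint Z hZ)]
  exact_mod_cast hc Z hZ

lemma integral_smul_add_smul_mul {W X : Ω → ℝ} (hZ : Integrable (fun ω => Z ω * X ω) P)
    (hW : Integrable (fun ω => W ω * X ω) P) (a b : ℝ) :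
    ∫ ω, (a • Z + b • W) ω * X ω ∂P = a * ∫ ω, Z ω * X ω ∂P + b * ∫ ω, W ω * X ω ∂P := by
  rw [← integral_const_mul, ← integral_const_mul,
    ← integral_add (hZ.const_mul a) (hW.const_mul b)]
  refine integral_congr_ae (Eventually.of_forall fun ω => ?_)
  simp only [Pi.add_apply, Pi.smul_apply, smul_eq_mul]
  ring

section FiniteCombination

variable {ι : Type*} [Fintype ι] {X : ι → Ω → ℝ}

lemma mul_sum_smul_apply {α : Type*} (Z : α → ℝ) (X : ι → α → ℝ) (c : ι → ℝ) (a : α) :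
    Z a * (∑ i, c i • X i) a = ∑ i, Z a * X i a * c i := by
  simp only [Finset.sum_apply, Pi.smul_apply, smul_eq_mul, Finset.mul_sum]
  exact Finset.sum_congr rfl fun i _ => by ring

lemma integrable_mul_sum_smul (c : ι → ℝ) (hint : ∀ i, Integrable (fun ω => Z ω * X i ω) P) :
    Integrable (fun ω => Z ω * (∑ i, c i • X i) ω) P := by
  simp only [mul_sum_smul_apply]
  exact integrable_finsetSum _ fun i _ => (hint i).mul_const (c i)

lemma integral_mul_sum_smul (c : ι → ℝ) (hint : ∀ i, Integrable (fun ω => Z ω * X i ω) P) :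
    ∫ ω, Z ω * (∑ i, c i • X i) ω ∂P = (fun i => ∫ ω, Z ω * X i ω ∂P) ⬝ᵥ c := by
  simp only [mul_sum_smul_apply]
  rw [integral_finsetSum _ fun i _ => (hint i).mul_const (c i)]
  exact Finset.sum_congr rfl fun i _ => integral_mul_const (c i) _

end FiniteCombination

lemma convex_image_integral_mul {ι : Type*} {X : ι → Ω → ℝ} (hD : Convex ℝ D)
    (hint : ∀ Z ∈ D, ∀ i, Integrable (fun ω => Z ω * X i ω) P) :
    Convex ℝ ((fun (Z : Ω → ℝ) i => ∫ ω, Z ω * X i ω ∂P) '' D) := by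
  rintro _ ⟨Z, hZ, rfl⟩ _ ⟨W, hW, rfl⟩ a b ha hb hab
  refine ⟨a • Z + b • W, hD hZ hW ha hb hab, funext fun i => ?_⟩
  exact integral_smul_add_smul_mul (hint Z hZ i) (hint W hW i) a b

end Densities

section WeakConvergence

/-- Convergence of `Z n` to `W` in `σ(L¹, L^∞)`, tested against bounded measurable functions as in
`WSeqCompact`. -/
def WeakTendsto (P : Measure Ω) (Z : ℕ → Ω → ℝ) (W : Ω → ℝ) : Prop :=
  ∀ g : Ω → ℝ, Measurable g → (∃ C : ℝ, ∀ ω, |g ω| ≤ C) →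
    Tendsto (fun k => ∫ ω, Z k ω * g ω ∂P) atTop (nhds (∫ ω, W ω * g ω ∂P))

lemma WSeqCompact.exists_weakTendsto (hD : WSeqCompact P D) {Z : ℕ → Ω → ℝ}
    (hZ : ∀ n, Z n ∈ D) :
    ∃ W ∈ D, ∃ φ : ℕ → ℕ, StrictMono φ ∧ WeakTendsto P (Z ∘ φ) W :=
  hD Z hZ

lemma WSeqCompact.exists_isMaxOn (hD : WSeqCompact P D) (hne : D.Nonempty) {J : (Ω → ℝ) → ℝ}
    (hbdd : BddAbove (J '' D))
    (husc : ∀ (Z : ℕ → Ω → ℝ) (W : Ω → ℝ) (m : ℝ), (∀ n, Z n ∈ D) → W ∈ D → WeakTendsto P Z W →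
      Tendsto (J ∘ Z) atTop (nhds m) → m ≤ J W) :
    ∃ W ∈ D, IsMaxOn J D W := by
  obtain ⟨v, -, hv, hvD⟩ := exists_seq_tendsto_sSup (hne.image J) hbdd
  choose Z hZ hZv using hvD
  obtain ⟨W, hW, φ, hφ, hlim⟩ := hD.exists_weakTendsto hZ
  have hJZ : Tendsto (J ∘ Z) atTop (nhds (sSup (J '' D))) := by
    simpa only [Function.comp_def, hZv] using hv
  refine ⟨W, hW, fun V hV => (le_csSup hbdd ⟨V, hV, rfl⟩).trans ?_⟩
  exact husc (Z ∘ φ) W _ (fun k => hZ _) hW hlim (hJZ.comp hφ.tendsto_atTop)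

/-- The supergradient inequality at `W` is affine in `Z k`, with the bounded slope `ψ ∘ W`. -/
lemma WeakTendsto.le_integral_comp {Z : ℕ → Ω → ℝ} {W : Ω → ℝ} (h : WeakTendsto P Z W)
    {s : Set ℝ} {φ ψ : ℝ → ℝ} (hψ : Measurable ψ) {K : ℝ} (hψK : ∀ w ∈ s, |ψ w| ≤ K)
    (hφψ : ∀ z ∈ s, ∀ w ∈ s, φ z ≤ φ w + (z - w) * ψ w)
    (hZs : ∀ k ω, Z k ω ∈ s) (hWs : ∀ ω, W ω ∈ s) (hWm : Measurable W)
    (hZint : ∀ k, Integrable (Z k) P) (hWint : Integrable W P)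
    (hφZ : ∀ k, Integrable (fun ω => φ (Z k ω)) P) (hφW : Integrable (fun ω => φ (W ω)) P)
    {m : ℝ} (hm : Tendsto (fun k => ∫ ω, φ (Z k ω) ∂P) atTop (nhds m)) :
    m ≤ ∫ ω, φ (W ω) ∂P := by
  have hg : Measurable fun ω => ψ (W ω) := hψ.comp hWm
  have hgK : ∀ ω, |ψ (W ω)| ≤ K := fun ω => hψK _ (hWs ω)
  have hmul : ∀ {V : Ω → ℝ}, Integrable V P → Integrable (fun ω => V ω * ψ (W ω)) P := fun hV =>
    hV.mul_bdd hg.aestronglyMeasurable (Eventually.of_forall hgK)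
  have hle : ∀ k, ∫ ω, φ (Z k ω) ∂P ≤
      ∫ ω, φ (W ω) ∂P + (∫ ω, Z k ω * ψ (W ω) ∂P - ∫ ω, W ω * ψ (W ω) ∂P) := by
    intro k
    have hdiff : Integrable (fun ω => Z k ω * ψ (W ω) - W ω * ψ (W ω)) P :=
      (hmul (hZint k)).sub (hmul hWint)
    rw [← integral_sub (hmul (hZint k)) (hmul hWint), ← integral_add hφW hdiff]
    refine integral_mono (hφZ k) (hφW.add hdiff) fun ω => ?_
    simpa only [Pi.add_apply, sub_mul] using hφψ _ (hZs k ω) _ (hWs ω)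
  have hlim := ((h _ hg ⟨K, hgK⟩).sub_const (∫ ω, W ω * ψ (W ω) ∂P)).const_add
    (∫ ω, φ (W ω) ∂P)
  rw [sub_self, add_zero] at hlim
  exact le_of_tendsto_of_tendsto' hm hlim hle

end WeakConvergence

section ConcaveEnergy

lemma div_one_add_le_tangent {z w : ℝ} (hz : 0 ≤ z) (hw : 0 ≤ w) :
    z / (1 + z) ≤ w / (1 + w) + (z - w) * (1 / (1 + w) ^ 2) := by
  have gap : w / (1 + w) + (z - w) * (1 / (1 + w) ^ 2) - z / (1 + z) =
      (z - w) ^ 2 / ((1 + w) ^ 2 * (1 + z)) := by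
    field_simp
    ring
  have : 0 ≤ (z - w) ^ 2 / ((1 + w) ^ 2 * (1 + z)) := by positivity
  linarith

lemma strictConcaveOn_div_one_add : StrictConcaveOn ℝ (Ici 0) fun z : ℝ => z / (1 + z) := by
  refine ⟨convex_Ici 0, fun z (hz : 0 ≤ z) w (hw : 0 ≤ w) hne a b ha hb hab => ?_⟩
  obtain rfl : a = 1 - b := by linarith
  have gap : ((1 - b) * z + b * w) / (1 + ((1 - b) * z + b * w)) -
      ((1 - b) * (z / (1 + z)) + b * (w / (1 + w))) =
      (1 - b) * b * (z - w) ^ 2 / ((1 + ((1 - b) * z + b * w)) * (1 + z) * (1 + w)) := by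
    field_simp
    ring
  have : 0 < (1 - b) * b * (z - w) ^ 2 /
      ((1 + ((1 - b) * z + b * w)) * (1 + z) * (1 + w)) :=
    div_pos (mul_pos (mul_pos ha hb) (sq_pos_of_ne_zero (sub_ne_zero.2 hne))) (by positivity)
  simp only [smul_eq_mul]
  linarith

/-- A strictly concave substitute for entropy, used to select a canonical density. As the integrand
`z / (1 + z)` is at most `z` and has bounded slope on `[0, ∞)`, it is finite and weakly upper
semicontinuous on densities, over any measure. -/
noncomputable def concaveEnergy (P : Measure Ω) (Z : Ω → ℝ) : ℝ := ∫ ω, Z ω / (1 + Z ω) ∂P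

variable {Z : Ω → ℝ}

lemma integrable_div_one_add (hZ : Z ∈ Dens P) : Integrable (fun ω => Z ω / (1 + Z ω)) P := by
  refine (Dens.integrable hZ).mono' (hZ.1.div (hZ.1.const_add 1)).aestronglyMeasurable
    (Eventually.of_forall fun ω => ?_)
  have h0 := hZ.2.1 ω
  rw [Real.norm_of_nonneg (by positivity)]
  exact div_le_self h0 (by linarith)

lemma concaveEnergy_nonneg (hZ : Z ∈ Dens P) : 0 ≤ concaveEnergy P Z :=
  integral_nonneg fun ω => div_nonneg (hZ.2.1 ω) (by linarith [hZ.2.1 ω])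

lemma concaveEnergy_le_one (hZ : Z ∈ Dens P) : concaveEnergy P Z ≤ 1 := by
  rw [← Dens.integral_eq_one hZ]
  refine integral_mono (integrable_div_one_add hZ) (Dens.integrable hZ) fun ω => ?_
  exact div_le_self (hZ.2.1 ω) (by linarith [hZ.2.1 ω])

lemma WeakTendsto.le_concaveEnergy {Z : ℕ → Ω → ℝ} {W : Ω → ℝ} (h : WeakTendsto P Z W)
    (hZ : ∀ k, Z k ∈ Dens P) (hW : W ∈ Dens P) {m : ℝ}
    (hm : Tendsto (concaveEnergy P ∘ Z) atTop (nhds m)) : m ≤ concaveEnergy P W := by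
  refine h.le_integral_comp (s := Ici 0) (φ := fun z => z / (1 + z))
    (ψ := fun w => 1 / (1 + w) ^ 2) (by fun_prop) (K := 1) (fun w (hw : 0 ≤ w) => ?_)
    (fun z hz w hw => div_one_add_le_tangent hz hw) (fun k => (hZ k).2.1) hW.2.1 hW.1
    (fun k => Dens.integrable (hZ k)) (Dens.integrable hW)
    (fun k => integrable_div_one_add (hZ k)) (integrable_div_one_add hW) hm
  rw [abs_of_nonneg (by positivity)]
  exact div_le_one_of_le₀ (one_le_pow₀ (by linarith)) (by positivity)

lemma exists_isMaxOn_concaveEnergy (hD : D ⊆ Dens P) (hDcomp : WSeqCompact P D)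
    (hne : D.Nonempty) : ∃ W ∈ D, IsMaxOn (concaveEnergy P) D W :=
  hDcomp.exists_isMaxOn hne
    ⟨1, forall_mem_image.2 fun _ hZ => concaveEnergy_le_one (hD hZ)⟩
    fun _ _ _ hZ hW hlim hm => hlim.le_concaveEnergy (fun k => hD (hZ k)) (hD hW) hm

end ConcaveEnergy

section StrongL1

variable {X Z : Ω → ℝ}

lemma abs_sub_truncation_le {α : Type*} (X : α → ℝ) (A : ℝ) (a : α) :
    |X a - truncation X A a| ≤ |X a| := by
  by_cases ha : X a ∈ Ioc (-A) A <;> simp [truncation, ha]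

lemma measurable_truncation (hX : Measurable X) (A : ℝ) : Measurable (truncation X A) :=
  (measurable_id.indicator measurableSet_Ioc).comp hX

lemma Dens.integrable_mul_truncation (hZ : Z ∈ Dens P) (hX : Measurable X) (A : ℝ) :
    Integrable (fun ω => Z ω * truncation X A ω) P :=
  (Dens.integrable hZ).mul_bdd (measurable_truncation hX A).aestronglyMeasurable
    (Eventually.of_forall (abs_truncation_le_bound X A))

/-- The truncation level is `n + 1` because `truncation X n` already vanishes where `X = -n`. -/
lemma lintegral_enorm_mul_sub_truncation_le (hD : D ⊆ Dens P) (hX : Measurable X) (hZ : Z ∈ D)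
    (n : ℕ) :
    ∫⁻ ω, ‖Z ω * X ω - Z ω * truncation X (n + 1) ω‖ₑ ∂P ≤ tailSup P D X n := by
  refine le_trans ?_ (le_iSup₂_of_le Z hZ le_rfl)
  rw [← lintegral_indicator (measurableSet_lt measurable_const hX.abs)]
  refine lintegral_mono fun ω => ?_
  have hZ0 : 0 ≤ Z ω := (hD hZ).2.1 ω
  by_cases hω : (n : ℝ) < |X ω|
  · rw [indicator_of_mem (show ω ∈ {ω | (n : ℝ) < |X ω|} from hω), Real.enorm_eq_ofReal_abs,
      ← mul_sub, abs_mul, abs_of_nonneg hZ0]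
    exact ENNReal.ofReal_le_ofReal
      (mul_le_mul_of_nonneg_left (abs_sub_truncation_le X _ ω) hZ0)
  · rw [truncation_eq_self (by linarith [not_lt.1 hω])]
    simp

lemma Ls.integrable_mul (hD : D ⊆ Dens P) (hX : X ∈ Ls P D) (hZ : Z ∈ D) :
    Integrable (fun ω => Z ω * X ω) P := by
  obtain ⟨n, hn⟩ := (hX.2.eventually_lt_const zero_lt_one).exists
  have htrunc := Dens.integrable_mul_truncation (hD hZ) hX.1 (n + 1)
  have hrest : Integrable (fun ω => Z ω * X ω - Z ω * truncation X (n + 1) ω) P :=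
    ⟨((hD hZ).1.mul hX.1).aestronglyMeasurable.sub htrunc.aestronglyMeasurable,
      (lintegral_enorm_mul_sub_truncation_le hD hX.1 hZ n).trans_lt (hn.trans ENNReal.one_lt_top)⟩
  exact (hrest.add htrunc).congr (Eventually.of_forall fun ω => sub_add_cancel _ _)

lemma tendstoUniformlyOn_integral_mul_truncation (hD : D ⊆ Dens P) (hX : X ∈ Ls P D) :
    TendstoUniformlyOn (fun (n : ℕ) (Z : Ω → ℝ) => ∫ ω, Z ω * truncation X (n + 1) ω ∂P)
      (fun Z => ∫ ω, Z ω * X ω ∂P) atTop D := by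
  rw [EMetric.tendstoUniformlyOn_iff]
  intro ε hε
  filter_upwards [hX.2.eventually_lt_const hε] with n hn Z hZ
  rw [edist_eq_enorm_sub, ← integral_sub (Ls.integrable_mul hD hX hZ)
    (Dens.integrable_mul_truncation (hD hZ) hX.1 _)]
  exact ((enorm_integral_le_lintegral_enorm _).trans
    (lintegral_enorm_mul_sub_truncation_le hD hX.1 hZ n)).trans_lt hn

lemma WeakTendsto.tendsto_integral_mul {Z : ℕ → Ω → ℝ} {W : Ω → ℝ} (h : WeakTendsto P Z W)
    (hD : D ⊆ Dens P) (hX : X ∈ Ls P D) (hZ : ∀ k, Z k ∈ D) (hW : W ∈ D) :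
    Tendsto (fun k => ∫ ω, Z k ω * X ω ∂P) atTop (nhds (∫ ω, W ω * X ω ∂P)) := by
  have hunif := tendstoUniformlyOn_integral_mul_truncation hD hX
  have hZD : Tendsto Z atTop (𝓟 D) := tendsto_principal.2 (Eventually.of_forall hZ)
  have htrunc : ∀ n : ℕ, Tendsto (fun V : Ω → ℝ => ∫ ω, V ω * truncation X (n + 1) ω ∂P)
      (map Z atTop) (nhds (∫ ω, W ω * truncation X (n + 1) ω ∂P)) := fun n =>
    tendsto_map'_iff.2 <| h _ (measurable_truncation hX.1 _) ⟨_, abs_truncation_le_bound X _⟩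
  exact tendsto_map'_iff.1 <|
    ((tendstoUniformlyOn_iff_tendstoUniformlyOnFilter.1 hunif).mono_right
      hZD).tendsto_of_eventually_tendsto (Eventually.of_forall htrunc) (hunif.tendsto_at hW)

lemma WSeqCompact.isCompact_image_integral_mul (hDcomp : WSeqCompact P D) (hD : D ⊆ Dens P)
    {ι : Type*} [Countable ι] {X : ι → Ω → ℝ} (hX : ∀ i, X i ∈ Ls P D) :
    IsCompact ((fun (Z : Ω → ℝ) i => ∫ ω, Z ω * X i ω ∂P) '' D) := by
  refine IsSeqCompact.isCompact fun y hy => ?_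
  choose Z hZ hZy using hy
  obtain ⟨W, hW, φ, hφ, hlim⟩ := hDcomp.exists_weakTendsto hZ
  refine ⟨_, ⟨W, hW, rfl⟩, φ, hφ, tendsto_pi_nhds.2 fun i => ?_⟩
  simpa only [← hZy, Function.comp_apply] using
    hlim.tendsto_integral_mul hD (hX i) (fun k => hZ _) hW

end StrongL1

section RiskNeutral

variable {F : Set (Ω → ℝ)}

lemma RiskNeutral.antitone (P : Measure Ω) : Antitone (RiskNeutral P) :=
  fun _ _ hFG _ hZ => ⟨hZ.1, fun X hX => hZ.2 X (hFG hX)⟩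

lemma mem_riskNeutral_iff (hD : D ⊆ Dens P) (hF : F ⊆ Ls P D) {Z : Ω → ℝ} (hZ : Z ∈ D) :
    Z ∈ RiskNeutral P F ↔ ∀ X ∈ F, ∫ ω, Z ω * X ω ∂P ≤ 0 := by
  refine (and_iff_right (hD hZ)).trans (forall₂_congr fun X hX => ?_)
  rw [eexp_eq_integral (Ls.integrable_mul hD (hF hX) hZ), ← EReal.coe_zero,
    EReal.coe_le_coe_iff]

lemma convex_inter_riskNeutral (hD : D ⊆ Dens P) (hDconv : Convex ℝ D) (hF : F ⊆ Ls P D) :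
    Convex ℝ (D ∩ RiskNeutral P F) := by
  rintro Z ⟨hZ, hZF⟩ W ⟨hW, hWF⟩ a b ha hb hab
  have hV := hDconv hZ hW ha hb hab
  rw [mem_riskNeutral_iff hD hF hZ] at hZF
  rw [mem_riskNeutral_iff hD hF hW] at hWF
  refine ⟨hV, (mem_riskNeutral_iff hD hF hV).2 fun X hX => ?_⟩
  rw [integral_smul_add_smul_mul (Ls.integrable_mul hD (hF hX) hZ)
    (Ls.integrable_mul hD (hF hX) hW)]
  exact add_nonpos (mul_nonpos_of_nonneg_of_nonpos ha (hZF X hX))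
    (mul_nonpos_of_nonneg_of_nonpos hb (hWF X hX))

lemma WeakTendsto.mem_riskNeutral {Z : ℕ → Ω → ℝ} {W : Ω → ℝ} (h : WeakTendsto P Z W)
    (hD : D ⊆ Dens P) (hF : F ⊆ Ls P D) (hZ : ∀ k, Z k ∈ D) (hW : W ∈ D)
    (hZF : ∀ X ∈ F, ∀ᶠ k in atTop, ∫ ω, Z k ω * X ω ∂P ≤ 0) : W ∈ RiskNeutral P F :=
  (mem_riskNeutral_iff hD hF hW).2 fun X hX =>
    le_of_tendsto (h.tendsto_integral_mul hD (hF hX) hZ hW) (hZF X hX)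

lemma WSeqCompact.inter_riskNeutral (hDcomp : WSeqCompact P D) (hD : D ⊆ Dens P)
    (hF : F ⊆ Ls P D) : WSeqCompact P (D ∩ RiskNeutral P F) := by
  intro Z hZ
  obtain ⟨W, hW, φ, hφ, hlim⟩ := hDcomp.exists_weakTendsto fun n => (hZ n).1
  refine ⟨W, ⟨hW, hlim.mem_riskNeutral hD hF (fun k => (hZ _).1) hW fun X hX => ?_⟩, φ, hφ, hlim⟩
  exact Eventually.of_forall fun k => (mem_riskNeutral_iff hD hF (hZ _).1).1 (hZ _).2 X hX

lemma exists_mem_convexHull_cohU_pos (hD : D ⊆ Dens P) (hDne : D.Nonempty)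
    (hDconv : Convex ℝ D) (hDcomp : WSeqCompact P D) (hFfin : F.Finite) (hF : F ⊆ Ls P D)
    (hempty : ¬(D ∩ RiskNeutral P F).Nonempty) : ∃ X ∈ convexHull ℝ F, 0 < cohU P D X := by
  have := hFfin.fintype
  have hint : ∀ Z ∈ D, ∀ X : F, Integrable (fun ω => Z ω * X.1 ω) P := fun Z hZ X =>
    Ls.integrable_mul hD (hF X.2) hZ
  let price : (Ω → ℝ) → F → ℝ := fun Z X => ∫ ω, Z ω * X.1 ω ∂P
  have hdisj : Disjoint (price '' D) (Iic 0) := by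
    rw [disjoint_left]
    rintro _ ⟨Z, hZ, rfl⟩ hle
    exact hempty ⟨Z, hZ, (mem_riskNeutral_iff hD hF hZ).2 fun X hX => hle ⟨X, hX⟩⟩
  obtain ⟨c, hc, ε, hε, hle⟩ := exists_mem_stdSimplex_forall_le_dotProduct (hDne.image price)
    (convex_image_integral_mul hDconv hint)
    (hDcomp.isCompact_image_integral_mul hD fun X => hF X.2) hdisj
  refine ⟨∑ X : F, c X • X.1, (convex_convexHull ℝ F).sum_mem (fun X _ => hc.1 X) hc.2
    fun X _ => subset_convexHull ℝ F X.2, ?_⟩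
  have hcohU : (ε : EReal) ≤ cohU P D (∑ X : F, c X • X.1) := by
    refine le_cohU (fun Z hZ => integrable_mul_sum_smul c (hint Z hZ)) fun Z hZ => ?_
    rw [integral_mul_sum_smul c (hint Z hZ)]
    exact hle _ ⟨Z, hZ, rfl⟩
  exact (EReal.coe_pos.2 hε).trans_le hcohU

lemma inter_riskNeutral_nonempty_of_countable (hD : D ⊆ Dens P) (hDcomp : WSeqCompact P D)
    (hF : F ⊆ Ls P D) (hFc : F.Countable)
    (hfin : ∀ G ⊆ F, G.Finite → (D ∩ RiskNeutral P G).Nonempty) :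
    (D ∩ RiskNeutral P F).Nonempty := by
  rcases F.eq_empty_or_nonempty with rfl | hFne
  · exact hfin ∅ subset_rfl finite_empty
  obtain ⟨X, rfl⟩ := hFc.exists_eq_range hFne
  choose Z hZD hZ using fun n : ℕ => hfin (X '' Iic n) (image_subset_range X _)
    ((finite_Iic n).image X)
  obtain ⟨W, hW, φ, hφ, hlim⟩ := hDcomp.exists_weakTendsto hZD
  refine ⟨W, hW, hlim.mem_riskNeutral hD hF (fun k => hZD _) hW ?_⟩
  rintro _ ⟨i, rfl⟩
  filter_upwards [eventually_ge_atTop i] with k hk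
  exact (mem_riskNeutral_iff hD ((image_subset_range X _).trans hF) (hZD _)).1 (hZ (φ k)) _
    ⟨i, hk.trans (hφ.le_apply), rfl⟩

lemma inter_riskNeutral_nonempty_of_forall_countable {B : Set (Ω → ℝ)} (hD : D ⊆ Dens P)
    (hDconv : Convex ℝ D) (hDcomp : WSeqCompact P D) (hB : B ⊆ Ls P D)
    (hcount : ∀ F ⊆ B, F.Countable → (D ∩ RiskNeutral P F).Nonempty) :
    (D ∩ RiskNeutral P B).Nonempty := by
  have hDens : ∀ F, D ∩ RiskNeutral P F ⊆ Dens P := fun F => inter_subset_left.trans hD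
  obtain ⟨F, hFB, hFc, hins⟩ := exists_countable_forall_isMaxOn_insert (B := B)
    (C := fun F => D ∩ RiskNeutral P F) (J := concaveEnergy P)
    (fun F G hFG => inter_subset_inter_right D (RiskNeutral.antitone P hFG))
    ⟨0, forall_mem_image.2 fun Z hZ => concaveEnergy_nonneg (hDens _ hZ)⟩
    fun F hFB hFc => exists_isMaxOn_concaveEnergy (hDens F)
      (hDcomp.inter_riskNeutral hD (hFB.trans hB)) (hcount F hFB hFc)
  obtain ⟨Z, hZ, hZmax⟩ := exists_isMaxOn_concaveEnergy (hDens F)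
    (hDcomp.inter_riskNeutral hD (hFB.trans hB)) (hcount F hFB hFc)
  refine ⟨Z, hZ.1, (mem_riskNeutral_iff hD hB hZ.1).2 fun X hX => ?_⟩
  obtain ⟨W, ⟨hW, hWins⟩, hWmax⟩ := hins X hX
  have hWF : W ∈ RiskNeutral P F := RiskNeutral.antitone P (subset_insert X F) hWins
  have hZW : Z =ᵐ[P] W := ae_eq_of_isMaxOn_integral_comp strictConcaveOn_div_one_add
    (convex_inter_riskNeutral hD hDconv (hFB.trans hB)) (fun V hV => (hDens F hV).2.1)
    (fun V hV => integrable_div_one_add (hDens F hV)) hZ ⟨hW, hWF⟩ hZmax hWmax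
  calc ∫ ω, Z ω * X ω ∂P = ∫ ω, W ω * X ω ∂P :=
        integral_congr_ae (hZW.mul (EventuallyEq.refl _ X))
    _ ≤ 0 := (mem_riskNeutral_iff hD (insert_subset (hB hX) (hFB.trans hB)) hW).1 hWins X
        (mem_insert X F)

end RiskNeutral

theorem stmt_11_general (P : Measure Ω) (D : Set (Ω → ℝ))
    (hDsub : D ⊆ Dens P) (hDne : D.Nonempty) (hDconv : Convex ℝ D)
    (hDcomp : WSeqCompact P D) (A : Set (Ω → ℝ))
    (hAconv : Convex ℝ A) (hAcons : DConsistent P D A) :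
    (¬∃ X ∈ A, 0 < cohU P D X) ↔ (D ∩ RiskNeutral P A).Nonempty := by
  constructor
  · intro hA
    obtain ⟨B, hB, hBeq⟩ := hAcons
    have hBLs : B ⊆ Ls P D := hB.trans inter_subset_right
    have hfin : ∀ F ⊆ B, F.Finite → (D ∩ RiskNeutral P F).Nonempty := by
      intro F hF hFfin
      by_contra hempty
      obtain ⟨X, hX, hpos⟩ := exists_mem_convexHull_cohU_pos hDsub hDne hDconv hDcomp hFfin
        (hF.trans hBLs) hempty
      exact hA ⟨X, convexHull_min (hF.trans (hB.trans inter_subset_left)) hAconv hX, hpos⟩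
    rw [hBeq]
    refine inter_riskNeutral_nonempty_of_forall_countable hDsub hDconv hDcomp hBLs
      fun F hF hFc => ?_
    exact inter_riskNeutral_nonempty_of_countable hDsub hDcomp (hF.trans hBLs) hFc
      fun G hG => hfin G (hG.trans hF)
  · rintro ⟨Z, hZ, -, hZA⟩ ⟨X, hX, hpos⟩
    exact hpos.not_ge ((iInf₂_le Z hZ).trans (hZA X hX))

/-- Fundamental Theorem of Asset Pricing, utility-based NGD.
For a convex weakly compact `D ⊆ 𝒫` and a convex `D`-consistent set `A ⊆ L⁰` of attainable
P&Ls, there is no good deal (no `X ∈ A` with `u(X) > 0`) iff `D ∩ ℛ(A) ≠ ∅`. -/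
theorem stmt_11 (P : Measure Ω) [IsProbabilityMeasure P] (D : Set (Ω → ℝ))
    (hDsub : D ⊆ Dens P) (hDne : D.Nonempty) (hDconv : Convex ℝ D)
    (hDcomp : WSeqCompact P D) (A : Set (Ω → ℝ)) (hAmeas : ∀ X ∈ A, Measurable X)
    (hAconv : Convex ℝ A) (hAcons : DConsistent P D A) :
    (¬∃ X ∈ A, 0 < cohU P D X) ↔ (D ∩ RiskNeutral P A).Nonempty :=
  stmt_11_general P D hDsub hDne hDconv hDcomp A hAconv hAcons
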